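/- Let D be a digraph, (X1,…,Xn) an ordered partition of its vertex set, and d a nonnegative integer such that: (i) for every 1 ≤ i ≤ n, the subdigraph induced by Xi has dichromatic number at most d; and (ii) for all 1 ≤ i < j ≤ n, if there is an arc uv with u ∈ Xj and v ∈ Xi, then the subdigraph induced by X_{i+1} ∪ X_{i+2} ∪ … ∪ X_j has dichromatic number at most d. Then χ⃗(D) ≤ 2d. -/

import Mathlib

/-!
Cut the sequence `X₁, …, Xₙ` greedily into consecutive blocks: starting from the first index not
yet used, each block is extended as long as the union of its parts still has dichromatic number
at most `d`.  Colour the blocks alternately with two disjoint palettes of `d` colours, each block by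
a `d`-dicolouring of its own.

An arc going backwards between two distinct blocks of the same parity goes from some `X j` to some
`X i` such that `X (i+1) ∪ … ∪ X j` contains a whole intermediate block together with the first part
of the block that follows it (`Greedy.not_good`).  By maximality of the greedy blocks, that union is
not `d`-dicolourable, contrary to hypothesis.  Hence the block number never decreases along a
monochromatic walk, so a monochromatic cycle would lie inside one block, which is impossible.
-/

def GoodColouring {V : Type} (A : V → V → Prop) {k : ℕ} (φ : V → Fin k) : Prop :=
  ∀ c : Fin k, ∀ v : V, φ v = c →
    ¬ Relation.TransGen (fun a b => A a b ∧ φ a = c ∧ φ b = c) v v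

noncomputable def dichrom {V : Type} (A : V → V → Prop) : ℕ :=
  sInf {k : ℕ | ∃ φ : V → Fin k, GoodColouring A φ}

/-- The subdigraph of `A` induced by `S` has a dicolouring with colours `0, …, d - 1`.  The
colouring is a total function to `ℕ`, with arbitrary values outside `S`. -/
def DicolourableOn {V : Type} (A : V → V → Prop) (d : ℕ) (S : Set V) : Prop :=
  ∃ φ : V → ℕ, (∀ v ∈ S, φ v < d) ∧ ∀ c : ℕ, ∀ v : V,
    ¬ Relation.TransGen (fun a b => A a b ∧ (a ∈ S ∧ b ∈ S) ∧ φ a = c ∧ φ b = c) v v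

theorem DicolourableOn.mono {V : Type} {A : V → V → Prop} {d : ℕ} {S T : Set V}
    (h : DicolourableOn A d T) (hST : S ⊆ T) : DicolourableOn A d S := by
  obtain ⟨φ, h1, h2⟩ := h
  refine ⟨φ, fun v hv => h1 v (hST hv), fun c v hc => h2 c v (Relation.TransGen.mono ?_ _ _ hc)⟩
  rintro a b ⟨hA, ⟨ha, hb⟩, hc⟩
  exact ⟨hA, ⟨hST ha, hST hb⟩, hc⟩

theorem dicolourableOn_empty {V : Type} (A : V → V → Prop) (d : ℕ) :
    DicolourableOn A d ∅ := by
  refine ⟨fun _ => 0, fun v hv => hv.elim, fun c v h => ?_⟩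
  obtain ⟨_, h, _⟩ := Relation.TransGen.head'_iff.1 h
  exact h.2.1.1.elim

/-- A finite loopless digraph has some dicolouring, so the infimum defining `dichrom` is over a
nonempty set. -/
theorem exists_goodColouring {V : Type} [Finite V] (A : V → V → Prop) (hirr : ∀ v, ¬ A v v) :
    {k : ℕ | ∃ φ : V → Fin k, GoodColouring A φ}.Nonempty := by
  obtain ⟨k, ⟨e⟩⟩ := Finite.exists_equiv_fin V
  refine ⟨k, e, fun c v _ h => ?_⟩
  obtain ⟨b, hb, _⟩ := Relation.TransGen.head'_iff.1 h
  have : v = b := e.injective (hb.2.1.trans hb.2.2.symm)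
  subst this
  exact hirr _ hb.1

theorem dicolourableOn_of_dichrom_le {V : Type} [Finite V] {A : V → V → Prop}
    (hirr : ∀ v, ¬ A v v) {d : ℕ} {S : Set V}
    (h : dichrom (fun a b : S => A a.1 b.1) ≤ d) : DicolourableOn A d S := by
  classical
  obtain ⟨ψ, hψ⟩ := Nat.sInf_mem
    (exists_goodColouring (fun a b : S => A a.1 b.1) (fun v => hirr v.1))
  change S → Fin (dichrom (fun a b : S => A a.1 b.1)) at ψ
  refine ⟨fun v => if hv : v ∈ S then (ψ ⟨v, hv⟩ : ℕ) else 0, fun v hv => ?_, fun c v hc => ?_⟩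
  · simpa [hv] using (ψ ⟨v, hv⟩).2.trans_le h
  · have hv : v ∈ S := by
      obtain ⟨_, h, _⟩ := Relation.TransGen.head'_iff.1 hc
      exact h.2.1.1
    have hcv : (ψ ⟨v, hv⟩ : ℕ) = c := by
      obtain ⟨_, h, _⟩ := Relation.TransGen.head'_iff.1 hc
      simpa [hv] using h.2.2.1
    have key : ∀ w, Relation.TransGen (fun a b => A a b ∧ (a ∈ S ∧ b ∈ S) ∧
        (if hv : a ∈ S then (ψ ⟨a, hv⟩ : ℕ) else 0) = c ∧
        (if hv : b ∈ S then (ψ ⟨b, hv⟩ : ℕ) else 0) = c) v w →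
        ∃ hw : w ∈ S, Relation.TransGen (fun a b : S => A a.1 b.1 ∧ ψ a = ψ ⟨v, hv⟩ ∧
          ψ b = ψ ⟨v, hv⟩) ⟨v, hv⟩ ⟨w, hw⟩ := by
      intro w hw
      induction hw with
      | single h =>
        obtain ⟨hA, ⟨ha, hb⟩, h1, h2⟩ := h
        rw [dif_pos hb] at h2
        exact ⟨hb, .single ⟨hA, rfl, Fin.ext (h2.trans hcv.symm)⟩⟩
      | tail _ h ih =>
        obtain ⟨hA, ⟨ha, hb⟩, h1, h2⟩ := h
        rw [dif_pos ha] at h1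
        rw [dif_pos hb] at h2
        obtain ⟨_, ih⟩ := ih
        exact ⟨hb, ih.tail ⟨hA, Fin.ext (h1.trans hcv.symm), Fin.ext (h2.trans hcv.symm)⟩⟩
    obtain ⟨_, hw⟩ := key v hc
    exact hψ _ _ rfl hw

namespace Greedy

open Classical in
/-- Greedy division of `ℕ` into consecutive blocks, where `P s t` says that the interval `[s, t]` is
admissible.  The value at `t` is the pair (first index of the block of `t`, number of that block). -/
noncomputable def state (P : ℕ → ℕ → Prop) : ℕ → ℕ × ℕ
  | 0 => (0, 0)
  | t + 1 => if P (state P t).1 (t + 1) then state P t else (t + 1, (state P t).2 + 1)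

variable {P : ℕ → ℕ → Prop}

theorem state_succ (t : ℕ) :
    (P (state P t).1 (t + 1) ∧ state P (t + 1) = state P t) ∨
    (¬ P (state P t).1 (t + 1) ∧ state P (t + 1) = (t + 1, (state P t).2 + 1)) := by
  by_cases h : P (state P t).1 (t + 1)
  · exact .inl ⟨h, by simp [state, h]⟩
  · exact .inr ⟨h, by simp [state, h]⟩

theorem start_le (t : ℕ) : (state P t).1 ≤ t := by
  induction t with
  | zero => simp [state]
  | succ t ih =>
    rcases state_succ (P := P) t with ⟨_, h⟩ | ⟨_, h⟩ <;> rw [h]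
    omega

theorem good (hP : ∀ t, P t t) (t : ℕ) : P (state P t).1 t := by
  cases t with
  | zero => exact hP 0
  | succ t =>
    rcases state_succ (P := P) t with ⟨h', h⟩ | ⟨_, h⟩ <;> rw [h]
    · exact h'
    · exact hP _

theorem block_mono : Monotone fun t => (state P t).2 := by
  refine monotone_nat_of_le_succ fun t => ?_
  rcases state_succ (P := P) t with ⟨_, h⟩ | ⟨_, h⟩ <;> simp [h]

theorem start_eq {i j : ℕ} (hij : i ≤ j) (h : (state P i).2 = (state P j).2) :
    (state P i).1 = (state P j).1 := by
  induction j, hij using Nat.le_induction with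
  | base => rfl
  | succ j hij ih =>
    have hm : (state P i).2 ≤ (state P j).2 := block_mono hij
    rcases state_succ (P := P) j with ⟨_, h'⟩ | ⟨_, h'⟩ <;> rw [h'] at h ⊢
    · exact ih h
    · simp only at h
      omega

theorem lt_start {i j : ℕ} (hij : i ≤ j) (h : (state P i).2 < (state P j).2) :
    i < (state P j).1 := by
  induction j, hij using Nat.le_induction with
  | base => omega
  | succ j hij ih =>
    rcases state_succ (P := P) j with ⟨_, h'⟩ | ⟨_, h'⟩ <;> rw [h'] at h ⊢
    · exact ih h
    · simp only
      omega

/-- If a whole block separates the blocks of `i` and `j`, then `[i + 1, j]` is not admissible: it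
contains that block and the next index after it. -/
theorem not_good (hanti : ∀ s t s' t', s ≤ s' → t' ≤ t → P s t → P s' t') {i j : ℕ} (hij : i ≤ j)
    (h : (state P i).2 + 2 ≤ (state P j).2) : ¬ P (i + 1) j := by
  induction j, hij using Nat.le_induction with
  | base => omega
  | succ j hij ih =>
    rcases state_succ (P := P) j with ⟨_, h'⟩ | ⟨hn, h'⟩ <;> rw [h'] at h
    · exact fun hp => ih h (hanti _ _ _ _ le_rfl (Nat.le_succ j) hp)
    · simp only at h
      exact fun hp => hn (hanti _ _ _ _ (lt_start hij (by omega)) le_rfl hp)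

end Greedy

theorem stmt7 {V : Type} [Fintype V] (A : V → V → Prop) (hirr : Irreflexive A)
    (n : ℕ) (X : Fin n → Set V)
    (hcover : ∀ v : V, ∃ i, v ∈ X i)
    (hdisj : ∀ i j, i ≠ j → Disjoint (X i) (X j))
    (d : ℕ)
    (h1 : ∀ i, dichrom (fun a b : X i => A a.1 b.1) ≤ d)
    (h2 : ∀ i j : Fin n, i < j → (∃ u ∈ X j, ∃ v ∈ X i, A u v) →
      dichrom (fun a b : {v : V | ∃ m : Fin n, i < m ∧ m ≤ j ∧ v ∈ X m} => A a.1 b.1) ≤ d) :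
    dichrom A ≤ 2 * d := by
  classical
  have hirr' : ∀ v, ¬ A v v := fun v => hirr v
  choose x hx using hcover
  let P : ℕ → ℕ → Prop := fun s t => DicolourableOn A d {v | s ≤ (x v : ℕ) ∧ (x v : ℕ) ≤ t}
  have hanti : ∀ s t s' t', s ≤ s' → t' ≤ t → P s t → P s' t' := fun s t s' t' hs ht h =>
    h.mono fun v hv => ⟨hs.trans hv.1, hv.2.trans ht⟩
  have hP : ∀ t, P t t := by
    intro t
    by_cases ht : t < n
    · refine (dicolourableOn_of_dichrom_le hirr' (h1 ⟨t, ht⟩)).mono fun v hv => ?_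
      have : x v = ⟨t, ht⟩ := Fin.ext (le_antisymm hv.2 hv.1)
      exact this ▸ hx v
    · refine (dicolourableOn_empty A d).mono fun v hv => ht (hv.1.trans_lt (x v).2)
  let β : V → ℕ := fun v => (Greedy.state P (x v)).2
  have hback : ∀ u v, A u v → ¬ β v + 2 ≤ β u := by
    intro u v huv hβ
    have hlt : x v < x u := by
      by_contra! hle
      have : β u ≤ β v := Greedy.block_mono (P := P) (Fin.le_def.1 hle)
      omega
    refine Greedy.not_good hanti (Fin.le_def.1 hlt.le) hβ ?_
    refine (dicolourableOn_of_dichrom_le hirr'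
      (h2 (x v) (x u) hlt ⟨u, hx u, v, hx v, huv⟩)).mono fun w hw => ?_
    exact ⟨x w, Fin.lt_def.2 hw.1, Fin.le_def.2 hw.2, hx w⟩
  have hblock : ∀ k, DicolourableOn A d {v | β v = k} := by
    intro k
    rcases Set.eq_empty_or_nonempty {v | β v = k} with he | hne
    · rw [he]
      exact dicolourableOn_empty A d
    · obtain ⟨w, hw, hmax⟩ := Set.exists_max_image _ x (Set.toFinite _) hne
      refine DicolourableOn.mono (Greedy.good hP (x w)) fun v hv => ?_
      have hle : (x v : ℕ) ≤ x w := hmax v hv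
      refine ⟨?_, hle⟩
      rw [← Greedy.start_eq hle (Eq.trans hv (Eq.symm hw))]
      exact Greedy.start_le _
  choose φ hφ hgood using hblock
  have hlt : ∀ v, φ (β v) v < d := fun v => hφ _ v rfl
  have hχ : ∀ v, φ (β v) v + d * (β v % 2) < 2 * d := by
    intro v
    have := hlt v
    rcases Nat.mod_two_eq_zero_or_one (β v) with h | h <;> rw [h] <;> omega
  refine Nat.sInf_le ⟨fun v => ⟨φ (β v) v + d * (β v % 2), hχ v⟩, fun c v hv hc => ?_⟩
  -- Vertices of equal colour have block numbers of equal parity and the same colour in their blocks.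
  have hsame : ∀ a, φ (β a) a + d * (β a % 2) = c →
      β a % 2 = β v % 2 ∧ φ (β a) a = φ (β v) v := by
    intro a ha
    have hv' : φ (β v) v + d * (β v % 2) = c := congrArg Fin.val hv
    have h1 := hlt a
    have h2 := hlt v
    rcases Nat.mod_two_eq_zero_or_one (β v) with h | h <;>
      rcases Nat.mod_two_eq_zero_or_one (β a) with h' | h' <;> rw [h] at hv' ⊢ <;>
      rw [h'] at ha ⊢ <;> omega
  have key : ∀ w, Relation.TransGen (fun a b => A a b ∧
      (⟨φ (β a) a + d * (β a % 2), hχ a⟩ : Fin (2 * d)) = c ∧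
      (⟨φ (β b) b + d * (β b % 2), hχ b⟩ : Fin (2 * d)) = c) v w →
      β v ≤ β w ∧ (β w = β v → Relation.TransGen (fun a b => A a b ∧
        (a ∈ {u | β u = β v} ∧ b ∈ {u | β u = β v}) ∧
        φ (β v) a = φ (β v) v ∧ φ (β v) b = φ (β v) v) v w) := by
    have step : ∀ a b, A a b → φ (β a) a + d * (β a % 2) = c →
        φ (β b) b + d * (β b % 2) = c → β a ≤ β b ∧ (β a = β v → β b = β v → A a b ∧
        (a ∈ {u | β u = β v} ∧ b ∈ {u | β u = β v}) ∧
        φ (β v) a = φ (β v) v ∧ φ (β v) b = φ (β v) v) := by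
      intro a b hab ha hb
      have ha' := hsame a ha
      have hb' := hsame b hb
      have := hback a b hab
      refine ⟨by omega, fun h h' => ⟨hab, ⟨h, h'⟩, ?_, ?_⟩⟩
      · rw [← ha'.2, h]
      · rw [← hb'.2, h']
    intro w hw
    induction hw with
    | single h =>
      have := step _ _ h.1 (congrArg Fin.val h.2.1) (congrArg Fin.val h.2.2)
      exact ⟨this.1, fun h' => .single (this.2 rfl h')⟩
    | tail _ h ih =>
      have := step _ _ h.1 (congrArg Fin.val h.2.1) (congrArg Fin.val h.2.2)
      refine ⟨ih.1.trans this.1, fun h' => ?_⟩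
      have hmid := le_antisymm (this.1.trans h'.le) ih.1
      exact (ih.2 hmid).tail (this.2 hmid h')
  exact hgood _ _ _ ((key v hc).2 rfl)
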